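/- arXiv:2003.10422 — 2 statements merged into one kernel-verified Lean document; each statement's English description precedes it below -/
import Mathlib

section
/- Let f_1, …, f_n : ℝ^d → ℝ be convex and L-smooth (i.e. ‖∇f_i(y) − ∇f_i(x)‖ ≤ L‖x − y‖ for all x, y), let f = (1/n)Σ_i f_i attain its minimum at x*, and set ζ̄² = (1/n)Σ_{i=1}^n ‖∇f_i(x*)‖². Then for any points x_1, …, x_n ∈ ℝ^d with average x̄ = (1/n)Σ_i x_i, it holds that (1/n)·Σ_{i=1}^n ‖∇f_i(x_i)‖² ≤ (3L²/n)·Σ_{i=1}^n ‖x_i − x̄‖² + 6L·(f(x̄) − f(x*)) + 3ζ̄². -/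
/-!
For a convex function `f` with `K`-Lipschitz gradient, minimising over `v` the two-sided control
`0 ≤ D_f(x - v, y) ≤ D_f(x, y) - ⟪∇f x - ∇f y, v⟫ + K / 2 * ‖v‖²` of the Bregman divergence gives
`‖∇f x - ∇f y‖² ≤ 2 * K * D_f(x, y)`. Now split
`∇f_i(x_i) = (∇f_i(x_i) - ∇f_i(x̄)) + (∇f_i(x̄) - ∇f_i(x*)) + ∇f_i(x*)`: the first term is
controlled by the Lipschitz condition, the second by the Bregman divergence, and the linear parts
of the Bregman divergences cancel in the average because `∇f(x*) = 0`.
-/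

open scoped Gradient NNReal RealInnerProductSpace

section BregmanDivergence

variable {E : Type*} [NormedAddCommGroup E] [NormedSpace ℝ E] {f : E → ℝ} {K : ℝ≥0}

/-- The Bregman divergence `D_f(x, y)`: the error at `x` of the first-order expansion of `f`
at `y`. It is written with `fderiv` instead of the gradient so that `E` need not be a Hilbert
space, and is meaningful only where `f` is differentiable at `y`. -/
noncomputable def bregmanDiv (f : E → ℝ) (x y : E) : ℝ :=
  f x - f y - fderiv ℝ f y (x - y)

theorem bregmanDiv_eq_add_add_fderiv_sub (f : E → ℝ) (x y z : E) :
    bregmanDiv f z y =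
      bregmanDiv f z x + bregmanDiv f x y + (fderiv ℝ f x - fderiv ℝ f y) (z - x) := by
  have hsplit : z - y = (z - x) + (x - y) := by abel
  simp only [bregmanDiv, hsplit, map_add, sub_apply]
  ring

theorem bregmanDiv_nonneg_of_convexOn {s : Set E} {x y : E} (hconv : ConvexOn ℝ s f)
    (hx : x ∈ s) (hy : y ∈ s) (hdiff : DifferentiableAt ℝ f y) : 0 ≤ bregmanDiv f x y := by
  have hline : HasDerivAt (f ∘ AffineMap.lineMap y x) (fderiv ℝ f y (x - y)) (0 : ℝ) := by
    refine HasFDerivAt.comp_hasDerivAt 0 ?_ AffineMap.hasDerivAt_lineMap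
    simpa using hdiff.hasFDerivAt
  have hslope := (hconv.comp_affineMap (AffineMap.lineMap y x)).le_slope_of_hasDerivAt
    (by simpa using hy) (by simpa using hx) zero_lt_one hline
  simp only [slope_def_field, Function.comp_apply, AffineMap.lineMap_apply_one,
    AffineMap.lineMap_apply_zero, sub_zero, div_one] at hslope
  exact sub_nonneg.2 hslope

theorem bregmanDiv_le_of_lipschitzWith_fderiv (hdiff : Differentiable ℝ f)
    (hlip : LipschitzWith K (fderiv ℝ f)) (x y : E) :
    bregmanDiv f x y ≤ K / 2 * ‖x - y‖ ^ 2 := by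
  let γ : ℝ → E := AffineMap.lineMap y x
  have hline (t : ℝ) : HasDerivAt (f ∘ γ) (fderiv ℝ f (γ t) (x - y)) t :=
    (hdiff (γ t)).hasFDerivAt.comp_hasDerivAt t AffineMap.hasDerivAt_lineMap
  let B : ℝ → ℝ := fun t ↦ f y + t * fderiv ℝ f y (x - y) + t ^ 2 * (K / 2 * ‖x - y‖ ^ 2)
  have hB (t : ℝ) : HasDerivAt B (fderiv ℝ f y (x - y) + t * (K * ‖x - y‖ ^ 2)) t := by
    have hlinear := (hasDerivAt_mul_const (fderiv ℝ f y (x - y))).const_add (f y) (x := t)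
    refine (hlinear.add ((hasDerivAt_pow 2 t).mul_const (K / 2 * ‖x - y‖ ^ 2))).congr_deriv ?_
    push_cast
    ring
  have hderiv_le (t : ℝ) (ht : 0 ≤ t) :
      fderiv ℝ f (γ t) (x - y) ≤ fderiv ℝ f y (x - y) + t * (K * ‖x - y‖ ^ 2) := by
    rw [← sub_le_iff_le_add']
    calc (fderiv ℝ f (γ t) - fderiv ℝ f y) (x - y)
        ≤ ‖fderiv ℝ f (γ t) - fderiv ℝ f y‖ * ‖x - y‖ :=
          (Real.le_norm_self _).trans (ContinuousLinearMap.le_opNorm _ _)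
      _ ≤ K * ‖γ t - y‖ * ‖x - y‖ := by gcongr; exact hlip.norm_sub_le _ _
      _ = t * (K * ‖x - y‖ ^ 2) := by
          rw [← dist_eq_norm (γ t), dist_lineMap_left, Real.norm_of_nonneg ht, dist_comm,
            dist_eq_norm]
          ring
  have hle : f (γ 1) ≤ B 1 :=
    image_le_of_deriv_right_le_deriv_boundary
      (fun t _ ↦ (hline t).continuousAt.continuousWithinAt)
      (fun t _ ↦ (hline t).hasDerivWithinAt) (by simp [γ, B])
      (fun t _ ↦ (hB t).continuousAt.continuousWithinAt)
      (fun t _ ↦ (hB t).hasDerivWithinAt) (fun t ht ↦ hderiv_le t ht.1)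
      (Set.right_mem_Icc.2 zero_le_one)
  simp only [γ, B, AffineMap.lineMap_apply_one, one_mul, one_pow] at hle
  simp only [bregmanDiv]
  linarith

theorem fderiv_sub_fderiv_apply_le_bregmanDiv_add (hdiff : Differentiable ℝ f)
    (hconv : ConvexOn ℝ Set.univ f) (hlip : LipschitzWith K (fderiv ℝ f)) (x y v : E) :
    (fderiv ℝ f x - fderiv ℝ f y) v ≤ bregmanDiv f x y + K / 2 * ‖v‖ ^ 2 := by
  have hnonneg : 0 ≤ bregmanDiv f (x - v) y :=
    bregmanDiv_nonneg_of_convexOn hconv (Set.mem_univ _) (Set.mem_univ _) (hdiff y)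
  have hle := bregmanDiv_le_of_lipschitzWith_fderiv hdiff hlip (x - v) x
  rw [bregmanDiv_eq_add_add_fderiv_sub f x, sub_sub_cancel_left, map_neg] at hnonneg
  rw [sub_sub_cancel_left, norm_neg] at hle
  linarith

theorem sum_mul_bregmanDiv_of_isLocalMin {ι : Type*} {s : Finset ι} {w : ι → ℝ} {f : ι → E → ℝ}
    {y : E} (hdiff : ∀ i ∈ s, DifferentiableAt ℝ (f i) y)
    (hmin : IsLocalMin (fun z ↦ ∑ i ∈ s, w i * f i z) y) (x : E) :
    ∑ i ∈ s, w i * bregmanDiv (f i) x y = ∑ i ∈ s, w i * f i x - ∑ i ∈ s, w i * f i y := by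
  have hcrit : ∑ i ∈ s, w i • fderiv ℝ (f i) y = 0 :=
    hmin.hasFDerivAt_eq_zero
      (HasFDerivAt.fun_sum fun i hi ↦ (hdiff i hi).hasFDerivAt.const_mul (w i))
  have hlin : ∑ i ∈ s, w i * fderiv ℝ (f i) y (x - y) = 0 := by
    simpa using DFunLike.congr_fun hcrit (x - y)
  simp only [bregmanDiv, mul_sub, Finset.sum_sub_distrib, hlin, sub_zero]

end BregmanDivergence

theorem norm_sum_sq_le_card_mul_sum_norm_sq {ι E : Type*} [SeminormedAddCommGroup E]
    (s : Finset ι) (v : ι → E) : ‖∑ i ∈ s, v i‖ ^ 2 ≤ s.card * ∑ i ∈ s, ‖v i‖ ^ 2 :=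
  (pow_le_pow_left₀ (norm_nonneg _) (norm_sum_le s v) 2).trans sq_sum_le_card_mul_sum_sq

section Gradient

variable {E : Type*} [NormedAddCommGroup E] [InnerProductSpace ℝ E] [CompleteSpace E] {K : ℝ≥0}

theorem lipschitzWith_fderiv_of_gradient {f : E → ℝ} (hlip : LipschitzWith K (∇ f)) :
    LipschitzWith K (fderiv ℝ f) := by
  simpa using (InnerProductSpace.toDual ℝ E).lipschitz.comp hlip

theorem norm_gradient_sub_sq_le_bregmanDiv {f : E → ℝ} (hdiff : Differentiable ℝ f)
    (hconv : ConvexOn ℝ Set.univ f) (hlip : LipschitzWith K (∇ f)) (x y : E) :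
    ‖∇ f x - ∇ f y‖ ^ 2 ≤ 2 * K * bregmanDiv f x y := by
  rcases eq_or_ne K 0 with rfl | hK
  · have hzero : ‖∇ f x - ∇ f y‖ ≤ 0 := by simpa using hlip.norm_sub_le x y
    simp [norm_le_zero_iff.1 hzero]
  · set g := ∇ f x - ∇ f y with hg
    have hinner : (fderiv ℝ f x - fderiv ℝ f y) g = ‖g‖ ^ 2 := by
      rw [← real_inner_self_eq_norm_sq]
      nth_rw 2 [hg]
      rw [inner_sub_left, inner_gradient_left, inner_gradient_left, sub_apply]
    have hle := fderiv_sub_fderiv_apply_le_bregmanDiv_add hdiff hconv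
      (lipschitzWith_fderiv_of_gradient hlip) x y ((K : ℝ)⁻¹ • g)
    rw [map_smul, hinner, norm_smul, norm_inv, NNReal.norm_eq, smul_eq_mul] at hle
    calc ‖g‖ ^ 2 = 2 * K * ((K : ℝ)⁻¹ * ‖g‖ ^ 2 - K / 2 * ((K : ℝ)⁻¹ * ‖g‖) ^ 2) := by
          field_simp
          ring
      _ ≤ 2 * K * bregmanDiv f x y := by
          gcongr
          exact sub_le_iff_le_add.2 hle

theorem norm_gradient_sq_le_bregmanDiv {f : E → ℝ} (hdiff : Differentiable ℝ f)
    (hconv : ConvexOn ℝ Set.univ f) (hlip : LipschitzWith K (∇ f)) (x y z : E) :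
    ‖∇ f x‖ ^ 2 ≤
      3 * K ^ 2 * ‖x - z‖ ^ 2 + 6 * K * bregmanDiv f z y + 3 * ‖∇ f y‖ ^ 2 := by
  have hsplit : ‖∇ f x‖ ^ 2 ≤
      3 * (‖∇ f x - ∇ f z‖ ^ 2 + ‖∇ f z - ∇ f y‖ ^ 2 + ‖∇ f y‖ ^ 2) := by
    simpa [Fin.sum_univ_three] using norm_sum_sq_le_card_mul_sum_norm_sq Finset.univ
      ![∇ f x - ∇ f z, ∇ f z - ∇ f y, ∇ f y]
  have hxz : ‖∇ f x - ∇ f z‖ ^ 2 ≤ K ^ 2 * ‖x - z‖ ^ 2 := by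
    rw [← mul_pow]
    gcongr
    exact hlip.norm_sub_le x z
  have hzy := norm_gradient_sub_sq_le_bregmanDiv hdiff hconv hlip z y
  linarith

theorem gradient_term_bound_convex_general {ι : Type*} {s : Finset ι} {w : ι → ℝ}
    {f : ι → E → ℝ} (hw : ∀ i ∈ s, 0 ≤ w i) (hdiff : ∀ i ∈ s, Differentiable ℝ (f i))
    (hconv : ∀ i ∈ s, ConvexOn ℝ Set.univ (f i)) (hlip : ∀ i ∈ s, LipschitzWith K (∇ (f i)))
    {y : E} (hmin : IsLocalMin (fun u ↦ ∑ i ∈ s, w i * f i u) y) (x : ι → E) (z : E) :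
    ∑ i ∈ s, w i * ‖∇ (f i) (x i)‖ ^ 2 ≤
      3 * K ^ 2 * ∑ i ∈ s, w i * ‖x i - z‖ ^ 2
        + 6 * K * (∑ i ∈ s, w i * f i z - ∑ i ∈ s, w i * f i y)
        + 3 * ∑ i ∈ s, w i * ‖∇ (f i) y‖ ^ 2 := by
  rw [← sum_mul_bregmanDiv_of_isLocalMin (fun i hi ↦ hdiff i hi y) hmin z]
  calc ∑ i ∈ s, w i * ‖∇ (f i) (x i)‖ ^ 2
      ≤ ∑ i ∈ s, w i * (3 * K ^ 2 * ‖x i - z‖ ^ 2 + 6 * K * bregmanDiv (f i) z y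
          + 3 * ‖∇ (f i) y‖ ^ 2) :=
        Finset.sum_le_sum fun i hi ↦ mul_le_mul_of_nonneg_left
          (norm_gradient_sq_le_bregmanDiv (hdiff i hi) (hconv i hi) (hlip i hi) (x i) y z) (hw i hi)
    _ = _ := by
        simp only [mul_add, Finset.sum_add_distrib, Finset.mul_sum, mul_left_comm (w _)]

end Gradient

/-- **Bound on the gradient term `T₁` in the convex consensus recursion.**
Let `f_1, …, f_n : ℝ^d → ℝ` be convex and `L`-smooth, let `f = (1/n)Σ_i f_i` attain its minimum
at `x*`, and set `ζ̄² = (1/n)Σ_i ‖∇f_i(x*)‖²`.  Then for any points `x_1, …, x_n` with average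
`x̄ = (1/n)Σ_i x_i`:
`(1/n)·Σ_i ‖∇f_i(x_i)‖² ≤ (3L²/n)·Σ_i ‖x_i − x̄‖² + 6L·(f(x̄) − f(x*)) + 3ζ̄²`. -/
theorem gradient_term_bound_convex {d n : ℕ} (hn : 0 < n) (L : ℝ) (hL : 0 ≤ L)
    (f : Fin n → EuclideanSpace ℝ (Fin d) → ℝ)
    (hdiff : ∀ i, Differentiable ℝ (f i))
    (hconv : ∀ i, ConvexOn ℝ Set.univ (f i))
    (hsmooth : ∀ i x y, ‖gradient (f i) y - gradient (f i) x‖ ≤ L * ‖x - y‖)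
    (fbar : EuclideanSpace ℝ (Fin d) → ℝ)
    (hfbar : ∀ x, fbar x = (n : ℝ)⁻¹ * ∑ i, f i x)
    (xstar : EuclideanSpace ℝ (Fin d)) (hmin : ∀ y, fbar xstar ≤ fbar y)
    (ζ2 : ℝ) (hζ2 : ζ2 = (n : ℝ)⁻¹ * ∑ i, ‖gradient (f i) xstar‖ ^ 2)
    (x : Fin n → EuclideanSpace ℝ (Fin d))
    (xbar : EuclideanSpace ℝ (Fin d)) (hxbar : xbar = (n : ℝ)⁻¹ • ∑ j, x j) :
    (n : ℝ)⁻¹ * ∑ i, ‖gradient (f i) (x i)‖ ^ 2 ≤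
      (3 * L ^ 2 / n) * ∑ i, ‖x i - xbar‖ ^ 2
        + 6 * L * (fbar xbar - fbar xstar) + 3 * ζ2 := by
  lift L to ℝ≥0 using hL
  have hlip (i : Fin n) : LipschitzWith L (∇ (f i)) := .of_dist_le_mul fun u v ↦ by
    simpa only [dist_eq_norm, norm_sub_rev u v] using hsmooth i v u
  have hlocmin : IsLocalMin (fun u ↦ ∑ i, (n : ℝ)⁻¹ * f i u) xstar :=
    .of_forall fun u ↦ by simpa only [hfbar, Finset.mul_sum] using hmin u
  simpa only [hfbar, hζ2, Finset.mul_sum, div_eq_mul_inv, mul_assoc] using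
    gradient_term_bound_convex_general (fun _ _ ↦ by positivity) (fun i _ ↦ hdiff i)
      (fun i _ ↦ hconv i) (fun i _ ↦ hlip i) hlocmin x xbar
end

section
/- Lower bound (Theorem 3): Let n > 1 and let W ∈ [0,1]^{n×n} be a symmetric doubly stochastic matrix with second-largest eigenvalue λ₂ = √(1−p), where 0 < p < 1, and let v ∈ ℝ^n be a unit-scaled eigenvector of W for λ₂ (so v ⊥ 1). Define y = 1 + v ∈ ℝ^n, f_i(x) = (1/2)(x − y_i)² for x ∈ ℝ (so L = μ = 1, no stochastic noise, minimizer x* = 1, and ζ̄² = ‖v‖²/n > 0). Consider the deterministic decentralized gradient iterates x^{(t+1)} = W·(x^{(t)} − η·(x^{(t)} − y)) ∈ ℝ^n started at x^{(0)} = v with any constant stepsize η > 0. Then for any target accuracy ε with 0 < ε ≤ ζ̄²(1−p)/16, in order to have (1/n)·‖x^{(T)} − x*·1‖² ≤ ε it is necessary that T ≥ ζ̄·√(1−p)·log(1/ε)/(4·√ε·p). In particular, decentralized SGD with τ = 1 on these strongly convex smooth functions requires T = Ω̃( ζ̄·(1−p)/(√ε·p) ) iterations to reach accuracy ε. -/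
/-!
Since `W` fixes `1` and scales `v` by `lam = √(1 - p)`, the iterates stay in the plane spanned by
`1` and `v`: `x t = (1 - (1 - η) ^ t) • 1 + b t • v`, where `b 0 = 1` and
`b (t + 1) = lam * ((1 - η) * b t + η)`. As `v ⊥ 1`, the mean squared error is
`(1 - η) ^ (2 * t) + b t ^ 2 * ζ2`.

The case `1 ≤ ε` is trivial, and if `ε < 1` the first term forces `0 < η < 2`. The two terms then
pull the stepsize in opposite directions. The coefficient `b` stays above the fixed point
`lam * η / (1 - lam * (1 - η))` of its recursion if `η ≤ 1`, and above `lam` if `1 ≤ η ≤ 2`, so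
small consensus error rules out `1 < η` and forces `η ≤ p * √(ε / ζ2) / lam`. With such a stepsize
the mean converges slowly: `(1 - η) ^ (2 * T) ≤ ε` needs `T ≥ log (1 / ε) / (4 * η)`.
-/

section Iterates

variable {R E : Type*} [CommRing R]

/-- The coefficient, after `t` steps of the gradient iteration with stepsize `η` started at an
eigenvector `v` with eigenvalue `lam`, of the iterate along `v`; see `gradient_iterate_eq`. -/
def eigenCoeff (lam η : R) : ℕ → R
  | 0 => 1
  | t + 1 => lam * ((1 - η) * eigenCoeff lam η t + η)

theorem gradient_iterate_eq [AddCommGroup E] [Module R E] {A : Module.End R E} {lam η : R}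
    {u v : E} (hu : A u = u) (hv : A v = lam • v) {x : ℕ → E} (hx0 : x 0 = v)
    (hx : ∀ t, x (t + 1) = A (x t - η • (x t - (u + v)))) (t : ℕ) :
    x t = (1 - (1 - η) ^ t) • u + eigenCoeff lam η t • v := by
  induction t with
  | zero => simp [hx0, eigenCoeff]
  | succ t ih =>
    have gradient_step : x t - η • (x t - (u + v)) =
        (1 - (1 - η) ^ (t + 1)) • u + ((1 - η) * eigenCoeff lam η t + η) • v := by
      rw [ih]
      module
    rw [hx, gradient_step, map_add, map_smul, map_smul, hu, hv, smul_smul, eigenCoeff,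
      mul_comm lam]

end Iterates

section CoefficientBounds

variable {R : Type*} [CommRing R] [LinearOrder R] [IsStrictOrderedRing R] {lam η : R}

theorem mul_le_eigenCoeff_mul (hlam0 : 0 ≤ lam) (hlam1 : lam ≤ 1) (hη : η ≤ 1) (t : ℕ) :
    lam * η ≤ eigenCoeff lam η t * (1 - lam * (1 - η)) := by
  induction t with
  | zero => rw [eigenCoeff]; linarith
  | succ t ih =>
    have hrate : 0 ≤ lam * (1 - η) := mul_nonneg hlam0 (sub_nonneg.mpr hη)
    calc lam * η = lam * (1 - η) * (lam * η) + lam * η * (1 - lam * (1 - η)) := by ring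
      _ ≤ lam * (1 - η) * (eigenCoeff lam η t * (1 - lam * (1 - η))) +
          lam * η * (1 - lam * (1 - η)) := add_le_add_left (mul_le_mul_of_nonneg_left ih hrate) _
      _ = eigenCoeff lam η (t + 1) * (1 - lam * (1 - η)) := by rw [eigenCoeff]; ring

theorem eigenCoeff_mem_Icc (hlam0 : 0 ≤ lam) (hlam1 : lam ≤ 1) (hη1 : 1 ≤ η) (hη2 : η ≤ 2)
    (t : ℕ) : eigenCoeff lam η t ∈ Set.Icc lam 1 := by
  induction t with
  | zero => exact ⟨hlam1, le_rfl⟩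
  | succ t ih =>
    obtain ⟨hlower, hupper⟩ := ih
    set b := eigenCoeff lam η t
    have hstep : eigenCoeff lam η (t + 1) = lam * (1 + (η - 1) * (1 - b)) := by
      rw [eigenCoeff]; ring
    have hgap : 0 ≤ (η - 1) * (1 - b) := mul_nonneg (by linarith) (by linarith)
    have hgap_le : (η - 1) * (1 - b) ≤ 1 * (1 - lam) :=
      mul_le_mul (by linarith) (by linarith) (by linarith) zero_le_one
    rw [hstep]
    constructor
    · exact le_mul_of_one_le_right hlam0 (by linarith)
    · calc lam * (1 + (η - 1) * (1 - b)) ≤ lam * (1 + 1 * (1 - lam)) := by gcongr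
        _ = 1 - (1 - lam) ^ 2 := by ring
        _ ≤ 1 := sub_le_self _ (sq_nonneg _)

theorem stepsize_mul_le_of_four_mul_eigenCoeff_le (hlam0 : 0 < lam) (hlam1 : lam ≤ 1)
    (hη0 : 0 ≤ η) (hη2 : η ≤ 2) {t : ℕ} (hb : 4 * eigenCoeff lam η t ≤ lam) :
    η * lam ≤ eigenCoeff lam η t * (1 - lam ^ 2) := by
  have hη1 : η ≤ 1 := by
    by_contra! h
    linarith [(eigenCoeff_mem_Icc hlam0.le hlam1 h.le hη2 t).1]
  have hfix := mul_le_eigenCoeff_mul hlam0.le hlam1 hη1 t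
  set b := eigenCoeff lam η t
  have hfactor : 1 ≤ (1 - b) * (1 + lam) := by nlinarith
  calc η * lam ≤ η * lam * ((1 - b) * (1 + lam)) := le_mul_of_one_le_right (by positivity) hfactor
    _ = (lam * η - b * (lam * η)) * (1 + lam) := by ring
    _ ≤ (b * (1 - lam)) * (1 + lam) :=
      mul_le_mul_of_nonneg_right (by linarith) (by positivity)
    _ = b * (1 - lam ^ 2) := by ring

theorem mem_Ioo_zero_two_of_one_sub_pow_sq_lt_one {T : ℕ} (h : ((1 - η) ^ T) ^ 2 < 1) :
    η ∈ Set.Ioo 0 2 := by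
  have habs : |1 - η| < 1 := by
    by_contra! h1
    rw [sq_lt_one_iff_abs_lt_one, abs_pow] at h
    exact h.not_ge (one_le_pow₀ h1)
  obtain ⟨hlower, hupper⟩ := abs_lt.mp habs
  constructor <;> linarith

end CoefficientBounds

theorem inv_card_mul_sum_add_mul_sq {ι K : Type*} [Fintype ι] [Nonempty ι] [Field K] [CharZero K]
    {v : ι → K} (hv : ∑ i, v i = 0) (a b : K) :
    (Fintype.card ι : K)⁻¹ * ∑ i, (a + b * v i) ^ 2 =
      a ^ 2 + b ^ 2 * ((Fintype.card ι : K)⁻¹ * ∑ i, v i ^ 2) := by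
  have hsum : ∑ i, (a + b * v i) ^ 2 = Fintype.card ι * a ^ 2 + b ^ 2 * ∑ i, v i ^ 2 := by
    simp only [add_sq, mul_pow, ← mul_assoc, Finset.sum_add_distrib, ← Finset.mul_sum, hv,
      Finset.sum_const, Finset.card_univ, nsmul_eq_mul, mul_zero, add_zero]
  rw [hsum, mul_add, inv_mul_cancel_left₀ (Nat.cast_ne_zero.mpr Fintype.card_ne_zero),
    mul_left_comm]

theorem log_one_div_le_of_one_sub_pow_sq_le {η ε : ℝ} {T : ℕ} (hη0 : 0 ≤ η) (hη : η ≤ 1 / 2)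
    (h : ((1 - η) ^ T) ^ 2 ≤ ε) : Real.log (1 / ε) ≤ 4 * T * η := by
  have hη1 : 0 < 1 - η := by linarith
  have hinv : (1 - η)⁻¹ ≤ 1 + 2 * η := by
    rw [inv_le_iff_one_le_mul₀ hη1]
    nlinarith
  have hlog : -(2 * η) ≤ Real.log (1 - η) := by
    linarith [Real.one_sub_inv_le_log_of_pos hη1]
  calc Real.log (1 / ε) = -Real.log ε := by rw [one_div, Real.log_inv]
    _ ≤ -Real.log (((1 - η) ^ T) ^ 2) := neg_le_neg (Real.log_le_log (by positivity) h)
    _ = 2 * T * -Real.log (1 - η) := by rw [Real.log_pow, Real.log_pow]; push_cast; ring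
    _ ≤ 2 * T * (2 * η) := by gcongr; linarith
    _ = 4 * T * η := by ring

theorem sqrt_mul_log_one_div_le_of_error_le {lam η ζ2 ε : ℝ} {T : ℕ} (hlam0 : 0 < lam)
    (hlam1 : lam ≤ 1) (hε : 0 < ε) (hε_small : ε ≤ ζ2 * lam ^ 2 / 16)
    (herr : ((1 - η) ^ T) ^ 2 + eigenCoeff lam η T ^ 2 * ζ2 ≤ ε) :
    √ζ2 * lam * Real.log (1 / ε) ≤ T * (4 * √ε * (1 - lam ^ 2)) := by
  have hp : 0 ≤ 1 - lam ^ 2 := sub_nonneg.mpr (pow_le_one₀ hlam0.le hlam1)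
  rcases le_or_gt 1 ε with hε1 | hε1
  · have hlog : Real.log (1 / ε) ≤ 0 :=
      Real.log_nonpos (by positivity) ((div_le_one hε).mpr hε1)
    exact (mul_nonpos_of_nonneg_of_nonpos (by positivity) hlog).trans (by positivity)
  have hζ2 : 0 < ζ2 := by
    refine pos_of_mul_pos_left ?_ (sq_nonneg lam)
    linarith
  have hmean : ((1 - η) ^ T) ^ 2 ≤ ε := by
    linarith [mul_nonneg (sq_nonneg (eigenCoeff lam η T)) hζ2.le]
  obtain ⟨hη0, hη2⟩ := mem_Ioo_zero_two_of_one_sub_pow_sq_lt_one (hmean.trans_lt hε1)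
  have hconsensus : √ζ2 * eigenCoeff lam η T ≤ √ε := by
    refine Real.le_sqrt_of_sq_le ?_
    rw [mul_pow, Real.sq_sqrt hζ2.le]
    linarith [sq_nonneg ((1 - η) ^ T)]
  have hcoeff : 4 * eigenCoeff lam η T ≤ lam := by
    refine le_of_abs_le (abs_le_of_sq_le_sq (le_of_mul_le_mul_left ?_ hζ2) hlam0.le)
    linarith [sq_nonneg ((1 - η) ^ T)]
  have hstep := stepsize_mul_le_of_four_mul_eigenCoeff_le hlam0 hlam1 hη0.le hη2.le hcoeff
  have hη : η ≤ 1 / 2 := by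
    refine le_of_mul_le_mul_right ?_ hlam0
    linarith [mul_le_mul_of_nonneg_right hcoeff hp, mul_nonneg hlam0.le (sq_nonneg lam)]
  calc √ζ2 * lam * Real.log (1 / ε) ≤ √ζ2 * lam * (4 * T * η) := by
        gcongr
        exact log_one_div_le_of_one_sub_pow_sq_le hη0.le hη hmean
    _ = 4 * T * √ζ2 * (η * lam) := by ring
    _ ≤ 4 * T * √ζ2 * (eigenCoeff lam η T * (1 - lam ^ 2)) := by gcongr
    _ = 4 * T * (1 - lam ^ 2) * (√ζ2 * eigenCoeff lam η T) := by ring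
    _ ≤ 4 * T * (1 - lam ^ 2) * √ε := by gcongr
    _ = T * (4 * √ε * (1 - lam ^ 2)) := by ring

theorem decentralized_lower_bound_general {ι : Type*} [Fintype ι] [Nonempty ι] {p : ℝ}
    (hp : 0 < p) (hp1 : p < 1) {W : Matrix ι ι ℝ} (hWrow : ∀ i, ∑ j, W i j = 1)
    {v : ι → ℝ} (heig : W.mulVec v = √(1 - p) • v) (horth : ∑ i, v i = 0)
    {y : ι → ℝ} (hy : ∀ i, y i = 1 + v i)
    {ζ2 : ℝ} (hζ2 : ζ2 = (Fintype.card ι : ℝ)⁻¹ * ∑ i, v i ^ 2)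
    {η : ℝ} {x : ℕ → ι → ℝ} (hx0 : x 0 = v)
    (hdyn : ∀ t, x (t + 1) = W.mulVec (x t - η • (x t - y)))
    {ε : ℝ} (hε : 0 < ε) (hε_small : ε ≤ ζ2 * (1 - p) / 16) {T : ℕ}
    (hacc : (Fintype.card ι : ℝ)⁻¹ * ∑ i, (x T i - 1) ^ 2 ≤ ε) :
    √ζ2 * √(1 - p) * Real.log (1 / ε) / (4 * √ε * p) ≤ T := by
  have hlam_sq : √(1 - p) ^ 2 = 1 - p := Real.sq_sqrt (by linarith)
  have hone : W.mulVec 1 = 1 := by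
    ext i
    simpa [Matrix.mulVec, dotProduct] using hWrow i
  obtain rfl : y = 1 + v := funext hy
  have hxT := gradient_iterate_eq (A := W.mulVecLin) hone heig hx0 hdyn T
  have herr : ((1 - η) ^ T) ^ 2 + eigenCoeff √(1 - p) η T ^ 2 * ζ2 ≤ ε := by
    have hdev (i : ι) : x T i - 1 = -(1 - η) ^ T + eigenCoeff √(1 - p) η T * v i := by
      simp only [hxT, Pi.add_apply, Pi.smul_apply, Pi.one_apply, smul_eq_mul]
      ring
    simpa only [hdev, inv_card_mul_sum_add_mul_sq horth, neg_sq, ← hζ2] using hacc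
  have hbound := sqrt_mul_log_one_div_le_of_error_le (Real.sqrt_pos.mpr (by linarith))
    (Real.sqrt_le_one.mpr (by linarith)) hε (by rwa [hlam_sq]) herr
  rw [hlam_sq, sub_sub_cancel] at hbound
  exact (div_le_iff₀ (by positivity)).mpr hbound

/-- **Lower bound** (Theorem 3, `thm:lower_bound`).
Let `n > 1`, let `W` be a symmetric doubly stochastic matrix with entries in `[0,1]` whose
second-largest eigenvalue is `λ₂ = √(1−p)` (`0 < p < 1`), and let `v ≠ 0` be an eigenvector of
`W` for `λ₂` orthogonal to the all-ones vector.  Put `y = 1 + v`, `f_i(x) = ½(x − y_i)²`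
(so `L = μ = 1`, no stochastic noise, minimizer `x* = 1`, and `ζ̄² = ‖v‖²/n > 0`), and run the
deterministic decentralized gradient iteration `x^{(t+1)} = W·(x^{(t)} − η·(x^{(t)} − y))`
started at `x^{(0)} = v` with constant stepsize `η > 0`.  Then for any accuracy
`0 < ε ≤ ζ̄²(1−p)/16`, achieving `(1/n)·‖x^{(T)} − x*·1‖² ≤ ε` forces
`T ≥ ζ̄·√(1−p)·log(1/ε)/(4·√ε·p)`. -/
theorem decentralized_lower_bound (n : ℕ) (hn : 1 < n)
    (p : ℝ) (hp : 0 < p) (hp1 : p < 1)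
    (W : Matrix (Fin n) (Fin n) ℝ)
    (hWsym : W.IsSymm)
    (hWnonneg : ∀ i j, 0 ≤ W i j) (hWle : ∀ i j, W i j ≤ 1)
    (hWrow : ∀ i, ∑ j, W i j = 1) (hWcol : ∀ j, ∑ i, W i j = 1)
    (v : Fin n → ℝ) (hv : v ≠ 0)
    (heig : W.mulVec v = Real.sqrt (1 - p) • v)
    (horth : ∑ i, v i = 0)
    (y : Fin n → ℝ) (hy : ∀ i, y i = 1 + v i)
    (ζ2 : ℝ) (hζ2 : ζ2 = (n : ℝ)⁻¹ * ∑ i, v i ^ 2)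
    (η : ℝ) (hη : 0 < η)
    (x : ℕ → Fin n → ℝ)
    (hx0 : x 0 = v)
    (hdyn : ∀ t, x (t + 1) = W.mulVec (x t - η • (x t - y)))
    (ε : ℝ) (hε : 0 < ε) (hεsmall : ε ≤ ζ2 * (1 - p) / 16)
    (T : ℕ)
    (hacc : (n : ℝ)⁻¹ * ∑ i, (x T i - 1) ^ 2 ≤ ε) :
    Real.sqrt ζ2 * Real.sqrt (1 - p) * Real.log (1 / ε) / (4 * Real.sqrt ε * p) ≤ (T : ℝ) := by
  have : Nonempty (Fin n) := ⟨0, by omega⟩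
  exact decentralized_lower_bound_general hp hp1 hWrow heig horth hy (by simpa using hζ2) hx0 hdyn
    hε hεsmall (by simpa using hacc)
end
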